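/- Let (G,B) be an enhanced Rota-Baxter two-sided brace with descendent brace G_B = (G,·,∗), a ∗ b = a ∘ Ad∘_{B(a)}(b), and B₊(a) = a ∘ B(a). Set G₊ = Im B₊, G₋ = Im B, K₊ = Ker B, K₋ = Ker B₊ (kernels taken as brace homomorphisms out of G_B, i.e. K₊ = {a ∈ G | B(a) = e}, K₋ = {a ∈ G | a ∘ B(a) = e}). Then K₊ is an ideal of the sub-brace G₊ and K₋ is an ideal of the sub-brace G₋; in particular K₋ ⊆ G₋ and K₊ ⊆ G₊. -/

import Mathlib

/-!
The enhanced identity is much stronger than it looks. Evaluated at `x = (B a)⁻¹` it gives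
`B (a ∘ b) = B a · B b` (`B_circ`): `B` is a homomorphism from `(G, ∘)` to `(G, ·)`. As `(G, ·)` is
abelian, `B` is then invariant under `∘`-conjugation, and the identity evaluated at `a = e` turns
into `x ∘ B b = x · B b` for all `x` and `b` (`circ_B`).

Hence `B₊ a = a · B a`, so `K₋ = {x | B x = x⁻¹}`, whose elements `x = B x⁻¹` lie in `G₋`. Elements
of `G₋` commute under `∘` and satisfy `s⁻¹ · (s ∘ x) = x` for every `s`, so `K₋` is an ideal of `G₋`.
On the other side `K₊` is the kernel of `B`, a homomorphism for both `(G, ·)` and `(G, ∘)`, which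
makes it an ideal of all of `G`; and `B₊` fixes it pointwise, so `K₊ ⊆ G₊`.
-/

structure IsGroup {G : Type*} (op : G → G → G) (e : G) (inv : G → G) : Prop where
  assoc : ∀ a b c, op (op a b) c = op a (op b c)
  one_op : ∀ a, op e a = a
  op_one : ∀ a, op a e = a
  inv_op : ∀ a, op (inv a) a = e
  op_inv : ∀ a, op a (inv a) = e

/-- A brace: an abelian group `(G, mul)` and a group `(G, circ)` with the compatibility
`a ∘ (b · c) = (a ∘ b) · a⁻¹ · (a ∘ c)`. -/
structure IsBrace {G : Type*} (mul : G → G → G) (e : G) (inv : G → G)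
    (circ : G → G → G) (ce : G) (cinv : G → G) : Prop where
  mul_group : IsGroup mul e inv
  mul_comm : ∀ a b, mul a b = mul b a
  circ_group : IsGroup circ ce cinv
  compat : ∀ a b c, circ a (mul b c) = mul (mul (circ a b) (inv a)) (circ a c)

/-- A homomorphism of braces preserves both operations. -/
def IsBraceHom {G H : Type*} (mulG circG : G → G → G) (mulH circH : H → H → H)
    (f : G → H) : Prop :=
  (∀ a b, f (mulG a b) = mulH (f a) (f b)) ∧ (∀ a b, f (circG a b) = circH (f a) (f b))

/-- A brace automorphism: a bijective self-homomorphism. -/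
def IsBraceAut {H : Type*} (mulH circH : H → H → H) (f : H → H) : Prop :=
  Function.Bijective f ∧ IsBraceHom mulH circH mulH circH f

/-- A semi-trivial action of the brace `G` on the brace `H`: each `Φ a` is a brace
automorphism of `H` and `Φ (a ∘ b) = Φ a ∘ Φ b`. -/
def IsSemiTrivialAction {G H : Type*} (circG : G → G → G)
    (mulH circH : H → H → H) (Φ : G → H → H) : Prop :=
  (∀ a, IsBraceAut mulH circH (Φ a)) ∧ (∀ a b h, Φ (circG a b) h = Φ a (Φ b h))

/-- A relative Rota-Baxter operator on the brace `G` with respect to the semi-trivial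
action `Φ` of `G` on `H`. -/
def IsRelRBO {G H : Type*} (mulG circG : G → G → G) (mulH circH : H → H → H)
    (Φ : G → H → H) (B : H → G) : Prop :=
  (∀ h k, mulG (B h) (B k) = B (mulH h k)) ∧
  (∀ h k, circG (B h) (B k) = B (circH h (Φ (B h) k)))

/-- An enhanced relative Rota-Baxter operator. -/
def IsEnhancedRelRBO {G H : Type*} (mulG circG : G → G → G) (mulH circH : H → H → H)
    (Φ : G → H → H) (B : H → G) : Prop :=
  (∀ h k, mulG (B h) (B k) = B (mulH h k)) ∧
  (∀ (a : G) (h k : H), circG (mulG (B h) a) (B k)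
      = mulG (B (circH h (Φ (mulG (B h) a) k))) a)

/-- A post-group: a group `(G, circ)` with an operation `tri` such that each left
multiplication `tri a` is an automorphism of `(G, circ)` and the weighted associativity
`(a ∘ (a ⊳ b)) ⊳ c = a ⊳ (b ⊳ c)` holds. -/
structure IsPostGroup {G : Type*} (circ : G → G → G) (ce : G) (cinv : G → G)
    (tri : G → G → G) : Prop where
  circ_group : IsGroup circ ce cinv
  tri_bij : ∀ a, Function.Bijective (tri a)
  tri_circ : ∀ a b c, tri a (circ b c) = circ (tri a b) (tri a c)
  weighted : ∀ a b c, tri (circ a (tri a b)) c = tri a (tri b c)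

/-- A post-brace: a brace `(G, mul, circ)` with `tri` making `(G, circ, tri)` a post-group
and `a ⊳ (b · c) = (a ⊳ b) · (a ⊳ c)`. -/
structure IsPostBrace {G : Type*} (mul : G → G → G) (e : G) (inv : G → G)
    (circ : G → G → G) (ce : G) (cinv : G → G) (tri : G → G → G) : Prop where
  brace : IsBrace mul e inv circ ce cinv
  post : IsPostGroup circ ce cinv tri
  tri_mul : ∀ a b c, tri a (mul b c) = mul (tri a b) (tri a c)

/-- A two-sided brace. -/
def IsTwoSidedBrace {G : Type*} (mul : G → G → G) (e : G) (inv : G → G)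
    (circ : G → G → G) (ce : G) (cinv : G → G) : Prop :=
  IsBrace mul e inv circ ce cinv ∧
  ∀ a b c, circ (mul a b) c = mul (mul (circ a c) (inv c)) (circ b c)

/-- The adjoint action of the `circ`-group: `Ad∘_a(b) = a ∘ b ∘ ā`. -/
def adC {G : Type*} (circ : G → G → G) (cinv : G → G) (a b : G) : G :=
  circ (circ a b) (cinv a)

/-- A Rota-Baxter operator on a two-sided brace (w.r.t. the adjoint semi-trivial action). -/
def IsRBTwoSided {G : Type*} (mul circ : G → G → G) (cinv : G → G) (B : G → G) : Prop :=
  (∀ a b, mul (B a) (B b) = B (mul a b)) ∧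
  (∀ a b, circ (B a) (B b) = B (circ a (adC circ cinv (B a) b)))

/-- An enhanced Rota-Baxter operator on a two-sided brace. -/
def IsEnhancedRBTwoSided {G : Type*} (mul circ : G → G → G) (cinv : G → G)
    (B : G → G) : Prop :=
  IsRBTwoSided mul circ cinv B ∧
  ∀ a b x, circ (mul (B a) x) (B b)
      = mul (B (circ a (adC circ cinv (mul (B a) x) b))) x

/-- `R × Id` on `X × X × X`. -/
def YB12 {X : Type*} (R : X × X → X × X) : X × X × X → X × X × X :=
  fun p => ((R (p.1, p.2.1)).1, (R (p.1, p.2.1)).2, p.2.2)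

/-- `Id × R` on `X × X × X`. -/
def YB23 {X : Type*} (R : X × X → X × X) : X × X × X → X × X × X :=
  fun p => (p.1, R p.2)

/-- A set-theoretical solution of the Yang-Baxter equation. -/
def IsYBSolution {X : Type*} (R : X × X → X × X) : Prop :=
  Function.Bijective R ∧
  YB12 R ∘ YB23 R ∘ YB12 R = YB23 R ∘ YB12 R ∘ YB23 R

/-- Non-degeneracy of a solution `R (a, b) = (φ_a b, ψ_b a)`. -/
def IsNonDegenerate {X : Type*} (R : X × X → X × X) : Prop :=
  (∀ a, Function.Bijective fun b => (R (a, b)).1) ∧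
  (∀ b, Function.Bijective fun a => (R (a, b)).2)

/-- Involutivity of a solution: `R ∘ R = Id`. -/
def IsInvolutiveSol {X : Type*} (R : X × X → X × X) : Prop :=
  ∀ p, R (R p) = p

/-- A matched pair of groups `(G, H, σ)` with `σ (a, h) = (r a h, l a h)`. -/
def IsMatchedPairOfGroups {G H : Type*} (opG : G → G → G) (eG : G)
    (opH : H → H → H) (eH : H) (r : G → H → H) (l : G → H → G) : Prop :=
  (∀ h, r eG h = h) ∧
  (∀ a b h, r a (r b h) = r (opG a b) h) ∧
  (∀ a b h, l (opG a b) h = opG (l a (r b h)) (l b h)) ∧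
  (∀ a, l a eH = a) ∧
  (∀ a h k, l (l a h) k = l a (opH h k)) ∧
  (∀ a h k, r a (opH h k) = opH (r a h) (r (l a h) k))

/-- A left ideal of the brace with multiplication `op` (with unit `u`) and second
operation `cop`: a subgroup of the `op`-group such that `p⁻¹ op (p cop x) ∈ S`
(expressed via the unique solution `r` of `op p r = cop p x`). -/
def IsLeftIdealOf {P : Type*} (op : P → P → P) (u : P) (cop : P → P → P)
    (S : Set P) : Prop :=
  u ∈ S ∧ (∀ p ∈ S, ∀ q ∈ S, op p q ∈ S) ∧
  (∀ p ∈ S, ∃ q ∈ S, op p q = u ∧ op q p = u) ∧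
  (∀ p : P, ∀ x ∈ S, ∀ r, op p r = cop p x → r ∈ S)

/-- `I` is an ideal of the sub-brace `S` of the ambient brace: a subgroup of `(S, mul)`,
normal in `(S, mul)` and in `(S, circ)`, and a left ideal of `S`. -/
def IsIdealOfSub {G : Type*} (mul : G → G → G) (e : G) (inv : G → G)
    (circ : G → G → G) (cinv : G → G) (S I : Set G) : Prop :=
  I ⊆ S ∧ e ∈ I ∧
  (∀ x ∈ I, ∀ y ∈ I, mul x y ∈ I) ∧ (∀ x ∈ I, inv x ∈ I) ∧
  (∀ s ∈ S, ∀ x ∈ I, mul (mul s x) (inv s) ∈ I) ∧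
  (∀ s ∈ S, ∀ x ∈ I, circ (circ s x) (cinv s) ∈ I) ∧
  (∀ s ∈ S, ∀ x ∈ I, mul (inv s) (circ s x) ∈ I)

/-- The units of the two group structures of a brace coincide. -/
theorem IsBrace.unit_eq {G : Type*} {mul : G → G → G} {e : G} {inv : G → G}
    {circ : G → G → G} {ce : G} {cinv : G → G}
    (h : IsBrace mul e inv circ ce cinv) : ce = e := by
  have h1 := h.compat ce e e
  simp only [h.mul_group.one_op, h.mul_group.op_one, h.circ_group.one_op] at h1
  rw [← h.mul_group.op_inv ce, ← h1, h.mul_group.op_one]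

theorem IsEnhancedRBTwoSided.B_unit {G : Type*} {mul : G → G → G} {e : G} {inv : G → G}
    {circ : G → G → G} {cinv : G → G} {B : G → G} (hm : IsGroup mul e inv)
    (hB : IsEnhancedRBTwoSided mul circ cinv B) : B e = e := by
  have h1 := hB.1.1 e e
  rw [hm.one_op] at h1
  calc B e = mul (inv (B e)) (mul (B e) (B e)) := by rw [← hm.assoc, hm.inv_op, hm.one_op]
    _ = e := by rw [h1, hm.inv_op]

/-- `B` carries `∘` to `·`: the enhanced identity at `x = (B a)⁻¹`. -/
theorem IsEnhancedRBTwoSided.B_circ {G : Type*} {mul : G → G → G} {e : G} {inv : G → G}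
    {circ : G → G → G} {ce : G} {cinv : G → G} {B : G → G}
    (h : IsBrace mul e inv circ ce cinv) (hB : IsEnhancedRBTwoSided mul circ cinv B)
    (a b : G) : B (circ a b) = mul (B a) (B b) := by
  obtain rfl := h.unit_eq
  have hm := h.mul_group
  have hc := h.circ_group
  have hce : cinv ce = ce := by rw [← hc.one_op (cinv ce), hc.op_inv]
  have h1 := hB.2 a b (inv (B a))
  simp only [hm.op_inv, adC, hc.one_op, hce, hc.op_one] at h1
  rw [h1, h.mul_comm, hm.assoc, hm.inv_op, hm.op_one]

/-- On the image of `B` the two operations agree: the enhanced identity at `a = e`, combined with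
the invariance of `B` under `∘`-conjugation. -/
theorem IsEnhancedRBTwoSided.circ_B {G : Type*} {mul : G → G → G} {e : G} {inv : G → G}
    {circ : G → G → G} {ce : G} {cinv : G → G} {B : G → G}
    (h : IsBrace mul e inv circ ce cinv) (hB : IsEnhancedRBTwoSided mul circ cinv B)
    (x b : G) : circ x (B b) = mul x (B b) := by
  obtain rfl := h.unit_eq
  have hm := h.mul_group
  have hc := h.circ_group
  have h1 := hB.2 ce b x
  rw [hB.B_unit hm, hm.one_op, hc.one_op] at h1
  have h2 : B (adC circ cinv x b) = B b := by
    rw [adC, hB.B_circ h, hB.B_circ h, h.mul_comm (B x), hm.assoc, ← hB.B_circ h, hc.op_inv,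
      hB.B_unit hm, hm.op_one]
  rw [h1, h2, h.mul_comm]

/-- For an enhanced Rota-Baxter two-sided brace `(G, B)` with
`B₊(a) = a ∘ B(a)`, `G₊ = Im B₊`, `G₋ = Im B`, `K₊ = Ker B`, `K₋ = Ker B₊`:
`K₊` is an ideal of the sub-brace `G₊` and `K₋` is an ideal of the sub-brace `G₋`
(in particular `K₊ ⊆ G₊` and `K₋ ⊆ G₋`). -/
theorem statement17 {G : Type*} (mul : G → G → G) (e : G) (inv : G → G)
    (circ : G → G → G) (ce : G) (cinv : G → G)
    (hG : IsTwoSidedBrace mul e inv circ ce cinv)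
    (B : G → G) (hB : IsEnhancedRBTwoSided mul circ cinv B)
    (Bplus : G → G) (hBplus : ∀ a, Bplus a = circ a (B a)) :
    IsIdealOfSub mul e inv circ cinv (Set.range Bplus) {x : G | B x = e} ∧
    IsIdealOfSub mul e inv circ cinv (Set.range B) {x : G | Bplus x = e} := by
  have h := hG.1
  have hm := h.mul_group
  have hc := h.circ_group
  obtain rfl := h.unit_eq
  have hBe : B ce = ce := hB.B_unit hm
  have hBc := hB.B_circ h
  have hcB := hB.circ_B h
  have hBm := hB.1.1
  have inv_unique : ∀ x y, mul x y = ce → y = inv x := fun x y hxy => by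
    rw [← hm.one_op y, ← hm.inv_op x, hm.assoc, hxy, hm.op_one]
  have hBi : ∀ x, B (inv x) = inv (B x) := fun x => by
    apply inv_unique
    rw [hBm, hm.op_inv, hBe]
  have conj : ∀ s x, mul (mul s x) (inv s) = x := fun s x => by
    rw [h.mul_comm s, hm.assoc, hm.op_inv, hm.op_one]
  have cancel : ∀ s x, mul (inv s) (mul s x) = x := fun s x => by
    rw [← hm.assoc, hm.inv_op, hm.one_op]
  have hp : ∀ x, Bplus x = mul x (B x) := fun x => by rw [hBplus, hcB]
  have invol : ∀ x, inv (inv x) = x := fun x => (inv_unique _ _ (hm.inv_op x)).symm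
  -- elements of `K₋` lie in the image of `B`
  have hK : ∀ x, Bplus x = ce → B (inv x) = x := fun x hx => by
    rw [hp] at hx
    rw [hBi, inv_unique _ _ hx, invol]
  refine ⟨⟨?_, hBe, ?_, ?_, ?_, ?_, ?_⟩, ⟨?_, ?_, ?_, ?_, ?_, ?_, ?_⟩⟩
  · intro x (hx : B x = ce)
    exact ⟨x, by rw [hBplus, hx, hc.op_one]⟩
  · intro x (hx : B x = ce) y (hy : B y = ce)
    change B _ = ce
    rw [← hBm, hx, hy, hm.one_op]
  · intro x (hx : B x = ce)
    change B _ = ce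
    rw [← hm.one_op (B (inv x)), ← hx, hBm, hm.op_inv, hBe, hx]
  · intro s _ x hx
    rwa [conj]
  · intro s _ x (hx : B x = ce)
    change B _ = ce
    rw [hBc, hBc, hx, hm.op_one, ← hBc, hc.op_inv, hBe]
  · intro s _ x (hx : B x = ce)
    change B _ = ce
    rw [← hBm, hBc, hx, hm.op_one, hBm, hm.inv_op, hBe]
  · intro x hx
    exact ⟨inv x, hK x hx⟩
  · change Bplus ce = ce
    rw [hp, hBe, hm.one_op]
  · intro x (hx : Bplus x = ce) y (hy : Bplus y = ce)
    change Bplus _ = ce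
    rw [hp] at hx hy ⊢
    rw [← hBm, h.mul_comm x y, hm.assoc, ← hm.assoc x, hx, hm.one_op, hy]
  · intro x hx
    change Bplus _ = ce
    rw [hp, hK x hx, hm.inv_op]
  · intro s _ x hx
    rwa [conj]
  · rintro _ ⟨t, rfl⟩ x hx
    -- `B t` and `x = B x⁻¹` commute under `∘`, so the conjugate is `x` itself
    have h1 : circ (B t) x = circ x (B t) := by
      rw [hcB, ← hK x hx, hcB, h.mul_comm]
    rw [h1, hc.assoc, hc.op_inv, hc.op_one]
    exact hx
  · intro s _ x hx
    have h1 : circ s x = mul s x := by rw [← hK x hx, hcB]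
    rw [h1, cancel]
    exact hx
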